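/- Let ν and π be probability densities on ℝ^d that are mutually absolutely continuous, with KL(ν,π) < ∞ and KL(π,ν) < ∞, and let λ ∈ [0,1]. Let μ_λ(x) = c_λ ν(x)^{1−λ} π(x)^λ with c_λ = (∫ ν^{1−λ} π^λ dx)^{−1}. Then KL(ν, μ_λ) ≤ λ·( KL(ν,π) + KL(π,ν) ). -/

import Mathlib

open MeasureTheory Real

/-!
Since `log (ν / μ_λ) = λ log (ν / π) + log Z` with `Z = ∫ ν ^ (1 - λ) π ^ λ`, integrating against
`ν` gives `KL(ν, μ_λ) = λ KL(ν, π) + log Z`. The weighted AM-GM inequality gives `Z ≤ 1`, hence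
`KL(ν, μ_λ) ≤ λ KL(ν, π)`, and `KL(π, ν)` is nonnegative by Gibbs' inequality.
-/

section Pointwise

variable {a b : ℝ}

lemma sub_le_mul_log_div (ha : 0 ≤ a) (hb : 0 ≤ b) (hab : b = 0 → a = 0) :
    a - b ≤ a * log (a / b) := by
  rcases ha.eq_or_lt with rfl | ha_pos
  · simpa using hb
  have hb_pos : 0 < b := hb.lt_of_ne' fun h ↦ ha_pos.ne' (hab h)
  calc a - b = a * (1 - (a / b)⁻¹) := by field_simp
    _ ≤ a * log (a / b) := by gcongr; exact one_sub_inv_le_log_of_pos (by positivity)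

lemma mul_log_div_rpow_mul_rpow_div (ha : 0 ≤ a) (hb : 0 ≤ b) (hab : b = 0 → a = 0)
    (t : ℝ) {Z : ℝ} (hZ : Z ≠ 0) :
    a * log (a / (a ^ (1 - t) * b ^ t / Z)) = t * (a * log (a / b)) + a * log Z := by
  rcases ha.eq_or_lt with rfl | ha_pos
  · simp
  have hb_pos : 0 < b := hb.lt_of_ne' fun h ↦ ha_pos.ne' (hab h)
  have ha_rpow := (rpow_pos_of_pos ha_pos (1 - t)).ne'
  have hb_rpow := (rpow_pos_of_pos hb_pos t).ne'
  rw [log_div ha_pos.ne' (by positivity), log_div (by positivity) hZ, log_mul ha_rpow hb_rpow,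
    log_rpow ha_pos, log_rpow hb_pos, log_div ha_pos.ne' hb_pos.ne']
  ring

end Pointwise

section Densities

variable {α : Type*} [MeasurableSpace α] {μ : Measure α} {f g : α → ℝ} {t : ℝ}

/-- The Kullback–Leibler divergence `KL(f, g)` of densities with respect to `μ`. It is the genuine
divergence only when `f` vanishes wherever `g` does and the integrand is integrable: otherwise the
divergence may be infinite, while this real-valued integral is not. -/
noncomputable def relEntropy (μ : Measure α) (f g : α → ℝ) : ℝ :=
  ∫ x, f x * log (f x / g x) ∂μ

/-- The unnormalized geometric tempering, that is, the weighted geometric mean of `f` and `g` with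
weight `t` on `g`. The convention `0 ^ 0 = 1` makes it equal to `f` at `t = 0` and to `g` at
`t = 1`. -/
noncomputable def geomMix (f g : α → ℝ) (t : ℝ) (x : α) : ℝ :=
  f x ^ (1 - t) * g x ^ t

/-- The geometric tempering density `μ_t = c_t f ^ (1 - t) g ^ t`, whose normalizing constant `c_t`
is encoded by dividing by the total mass. -/
noncomputable def geomTempering (μ : Measure α) (f g : α → ℝ) (t : ℝ) (x : α) : ℝ :=
  geomMix f g t x / ∫ y, geomMix f g t y ∂μ

lemma integral_sub_integral_le_relEntropy (hf : 0 ≤ᵐ[μ] f) (hg : 0 ≤ᵐ[μ] g)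
    (hfi : Integrable f μ) (hgi : Integrable g μ) (hac : ∀ᵐ x ∂μ, g x = 0 → f x = 0)
    (hKL : Integrable (fun x ↦ f x * log (f x / g x)) μ) :
    ∫ x, f x ∂μ - ∫ x, g x ∂μ ≤ relEntropy μ f g := by
  rw [← integral_sub hfi hgi]
  refine integral_mono_ae (hfi.sub hgi) hKL ?_
  filter_upwards [hf, hg, hac] with x hfx hgx hx using sub_le_mul_log_div hfx hgx hx

lemma relEntropy_nonneg (hf : 0 ≤ᵐ[μ] f) (hg : 0 ≤ᵐ[μ] g)
    (hfi : Integrable f μ) (hgi : Integrable g μ) (hgf : ∫ x, g x ∂μ ≤ ∫ x, f x ∂μ)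
    (hac : ∀ᵐ x ∂μ, g x = 0 → f x = 0)
    (hKL : Integrable (fun x ↦ f x * log (f x / g x)) μ) :
    0 ≤ relEntropy μ f g :=
  (sub_nonneg.2 hgf).trans (integral_sub_integral_le_relEntropy hf hg hfi hgi hac hKL)

lemma geomMix_nonneg_ae (hf : 0 ≤ᵐ[μ] f) (hg : 0 ≤ᵐ[μ] g) (t : ℝ) : 0 ≤ᵐ[μ] geomMix f g t := by
  filter_upwards [hf, hg] with x hfx hgx
    using mul_nonneg (rpow_nonneg hfx _) (rpow_nonneg hgx _)

lemma geomMix_le_convexCombination_ae (hf : 0 ≤ᵐ[μ] f) (hg : 0 ≤ᵐ[μ] g)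
    (ht : t ∈ Set.Icc (0 : ℝ) 1) :
    ∀ᵐ x ∂μ, geomMix f g t x ≤ (1 - t) * f x + t * g x := by
  filter_upwards [hf, hg] with x hfx hgx
    using geom_mean_le_arith_mean2_weighted (sub_nonneg.2 ht.2) ht.1 hfx hgx (sub_add_cancel 1 t)

lemma integrable_geomMix (hf : 0 ≤ᵐ[μ] f) (hg : 0 ≤ᵐ[μ] g)
    (hfi : Integrable f μ) (hgi : Integrable g μ) (ht : t ∈ Set.Icc (0 : ℝ) 1) :
    Integrable (geomMix f g t) μ := by
  have hmeas : AEStronglyMeasurable (geomMix f g t) μ :=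
    ((hfi.aemeasurable.pow_const _).mul (hgi.aemeasurable.pow_const _)).aestronglyMeasurable
  refine ((hfi.const_mul (1 - t)).add (hgi.const_mul t)).mono' hmeas ?_
  filter_upwards [geomMix_nonneg_ae hf hg t, geomMix_le_convexCombination_ae hf hg ht]
    with x hnonneg hle
  rwa [norm_of_nonneg hnonneg]

lemma integral_geomMix_le (hf : 0 ≤ᵐ[μ] f) (hg : 0 ≤ᵐ[μ] g)
    (hfi : Integrable f μ) (hgi : Integrable g μ) (ht : t ∈ Set.Icc (0 : ℝ) 1) :
    ∫ x, geomMix f g t x ∂μ ≤ (1 - t) * ∫ x, f x ∂μ + t * ∫ x, g x ∂μ := by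
  calc ∫ x, geomMix f g t x ∂μ ≤ ∫ x, ((1 - t) * f x + t * g x) ∂μ :=
        integral_mono_ae (integrable_geomMix hf hg hfi hgi ht)
          ((hfi.const_mul _).add (hgi.const_mul _)) (geomMix_le_convexCombination_ae hf hg ht)
    _ = (1 - t) * ∫ x, f x ∂μ + t * ∫ x, g x ∂μ := by
        rw [integral_add (hfi.const_mul _) (hgi.const_mul _), integral_const_mul,
          integral_const_mul]

lemma integral_geomMix_pos (hf : 0 ≤ᵐ[μ] f) (hg : 0 ≤ᵐ[μ] g)
    (hfi : Integrable f μ) (hgi : Integrable g μ) (hac : ∀ᵐ x ∂μ, g x = 0 → f x = 0)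
    (hf_pos : 0 < ∫ x, f x ∂μ) (ht : t ∈ Set.Icc (0 : ℝ) 1) :
    0 < ∫ x, geomMix f g t x ∂μ := by
  have hmix := geomMix_nonneg_ae hf hg t
  refine (integral_nonneg_of_ae hmix).lt_of_ne' fun hzero ↦ hf_pos.ne' ?_
  rw [integral_eq_zero_iff_of_nonneg_ae hmix (integrable_geomMix hf hg hfi hgi ht)] at hzero
  refine integral_eq_zero_of_ae ?_
  filter_upwards [hzero, hf, hg, hac] with x hx hfx hgx hacx
  rcases mul_eq_zero.1 hx with hx | hx
  · exact ((rpow_eq_zero_iff_of_nonneg hfx).1 hx).1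
  · exact hacx ((rpow_eq_zero_iff_of_nonneg hgx).1 hx).1

lemma relEntropy_geomTempering (hf : 0 ≤ᵐ[μ] f) (hg : 0 ≤ᵐ[μ] g)
    (hfi : Integrable f μ) (hac : ∀ᵐ x ∂μ, g x = 0 → f x = 0)
    (hKL : Integrable (fun x ↦ f x * log (f x / g x)) μ)
    (hmass : ∫ x, geomMix f g t x ∂μ ≠ 0) :
    relEntropy μ f (geomTempering μ f g t) =
      t * relEntropy μ f g + (∫ x, f x ∂μ) * log (∫ x, geomMix f g t x ∂μ) := by
  calc relEntropy μ f (geomTempering μ f g t)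
      = ∫ x, (t * (f x * log (f x / g x)) + f x * log (∫ y, geomMix f g t y ∂μ)) ∂μ := by
        refine integral_congr_ae ?_
        filter_upwards [hf, hg, hac] with x hfx hgx hx
          using mul_log_div_rpow_mul_rpow_div hfx hgx hx t hmass
    _ = t * relEntropy μ f g + (∫ x, f x ∂μ) * log (∫ x, geomMix f g t x ∂μ) := by
        rw [integral_add (hKL.const_mul _) (hfi.mul_const _), integral_const_mul,
          integral_mul_const, relEntropy]

theorem KL_nu_geometric_tempering_le_general (hf : 0 ≤ᵐ[μ] f) (hg : 0 ≤ᵐ[μ] g)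
    (hfi : Integrable f μ) (hgi : Integrable g μ) (hf_one : ∫ x, f x ∂μ = 1)
    (hg_one : ∫ x, g x ∂μ = 1) (hac : ∀ᵐ x ∂μ, g x = 0 → f x = 0)
    (hKL : Integrable (fun x ↦ f x * log (f x / g x)) μ) (ht : t ∈ Set.Icc (0 : ℝ) 1) :
    relEntropy μ f (geomTempering μ f g t) ≤ t * relEntropy μ f g := by
  have hmass_pos : 0 < ∫ x, geomMix f g t x ∂μ :=
    integral_geomMix_pos hf hg hfi hgi hac (hf_one ▸ one_pos) ht
  have hmass_le_one : ∫ x, geomMix f g t x ∂μ ≤ 1 := by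
    simpa [hf_one, hg_one] using integral_geomMix_le hf hg hfi hgi ht
  rw [relEntropy_geomTempering hf hg hfi hac hKL hmass_pos.ne', hf_one, one_mul]
  exact add_le_of_nonpos_right (log_nonpos hmass_pos.le hmass_le_one)

end Densities

/-- For mutually absolutely continuous probability densities ν, π on ℝ^d
with finite KL divergences in both directions, and λ ∈ [0,1], with
μ_λ = c_λ ν^{1−λ} π^λ the geometric tempering (c_λ the normalizing constant),
we have KL(ν, μ_λ) ≤ λ·(KL(ν,π) + KL(π,ν)). -/
theorem KL_nu_geometric_tempering_le
    (d : ℕ) (nu pd : (Fin d → ℝ) → ℝ)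
    (hnu_meas : Measurable nu) (hpd_meas : Measurable pd)
    (hnu_nonneg : ∀ x, 0 ≤ nu x) (hpd_nonneg : ∀ x, 0 ≤ pd x)
    (hnu_int : Integrable nu) (hpd_int : Integrable pd)
    (hnu_one : ∫ x, nu x = 1) (hpd_one : ∫ x, pd x = 1)
    (hac : ∀ x, nu x = 0 ↔ pd x = 0)
    (hKLnp : Integrable (fun x => nu x * Real.log (nu x / pd x)))
    (hKLpn : Integrable (fun x => pd x * Real.log (pd x / nu x)))
    (lam : ℝ) (hlam : lam ∈ Set.Icc (0 : ℝ) 1) :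
    (∫ x, nu x * Real.log (nu x /
        ((nu x) ^ (1 - lam) * (pd x) ^ lam / ∫ y, (nu y) ^ (1 - lam) * (pd y) ^ lam)))
      ≤ lam * ((∫ x, nu x * Real.log (nu x / pd x))
                + ∫ x, pd x * Real.log (pd x / nu x)) := by
  have hnu : 0 ≤ᵐ[volume] nu := .of_forall hnu_nonneg
  have hpd : 0 ≤ᵐ[volume] pd := .of_forall hpd_nonneg
  calc relEntropy volume nu (geomTempering volume nu pd lam)
      ≤ lam * relEntropy volume nu pd :=
        KL_nu_geometric_tempering_le_general hnu hpd hnu_int hpd_int hnu_one hpd_one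
          (.of_forall fun x ↦ (hac x).2) hKLnp hlam
    _ ≤ lam * (relEntropy volume nu pd + relEntropy volume pd nu) :=
        mul_le_mul_of_nonneg_left (le_add_of_nonneg_right <|
          relEntropy_nonneg hpd hnu hpd_int hnu_int (hnu_one.trans hpd_one.symm).le
            (.of_forall fun x ↦ (hac x).1) hKLpn) hlam.1
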